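/- arXiv:2411.14221 — 2 statements merged into one kernel-verified Lean document; each statement's English description precedes it below -/
import Mathlib

section
/- Let f(n) ≥ 0 with ∑_{n≥1} f(n) < ∞, let λ_n be nonnegative reals, and F(x) = ∑_{n≥1} f(n) e^{2πi λ_n x}. For any Λ > 0, Y ≥ 1, β ∈ ℝ, and x ∈ ℝ: max_{|u| ≤ Y/2} |Re(e^{iβ} F(x+u))| ≥ (1/2) Re(F₁(x)) - 4F(0)/(π² Y Λ), where F₁(x) = ∑_{n≥1} f(n) e^{2πi λ_n x} max(0, 1 - |Λ - λ_n|/Λ). -/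
set_option autoImplicit false

open Real MeasureTheory

lemma tri_ft (u : ℝ) : FourierTransform.fourier (fun t : ℝ => ((max 0 (1 - |t|) : ℝ) : ℂ)) u = ((sinc (π * u) ^ 2 : ℝ) : ℂ) := by
  rw [Real.fourier_real_eq_integral_exp_smul]
  have h0 : ∀ c : ℂ, ∫ t : ℝ, Complex.exp (c * t) * ((max 0 (1 - |t|) : ℝ) : ℂ)
      = (∫ t in (-1:ℝ)..0, Complex.exp (c * t) * (1 + t)) + ∫ t in (0:ℝ)..1, Complex.exp (c * t) * (1 - t) := by
    intro c
    have hc : Continuous (fun t : ℝ => Complex.exp (c * t) * ((max 0 (1 - |t|) : ℝ) : ℂ)) := by fun_prop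
    rw [← intervalIntegral.integral_eq_integral_of_support_subset (a := -1) (b := 1),
      ← intervalIntegral.integral_add_adjacent_intervals (hc.intervalIntegrable _ 0) (hc.intervalIntegrable _ _)]
    · congr 1
      · apply intervalIntegral.integral_congr
        intro t ht
        rw [Set.uIcc_of_le (by norm_num)] at ht
        simp only
        rw [abs_of_nonpos ht.2, max_eq_right (by linarith [ht.1])]
        push_cast; ring
      · apply intervalIntegral.integral_congr
        intro t ht
        rw [Set.uIcc_of_le (by norm_num)] at ht
        simp only
        rw [abs_of_nonneg ht.1, max_eq_right (by linarith [ht.2])]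
        push_cast; ring
    · intro t ht
      by_contra h
      apply ht
      have : 1 ≤ |t| := by
        by_contra h2
        push Not at h2
        have := abs_lt.mp h2
        exact h ⟨this.1, this.2.le⟩
      simp only
      rw [max_eq_left (by linarith)]; simp
  have h1 : ∫ v : ℝ, Complex.exp (((-2 * π * v * u : ℝ) : ℂ) * Complex.I) • ((max 0 (1 - |v|) : ℝ) : ℂ)
      = ∫ t : ℝ, Complex.exp ((-2 * π * u * Complex.I) * t) * ((max 0 (1 - |t|) : ℝ) : ℂ) := by
    congr 1; ext v; rw [smul_eq_mul]; congr 2; push_cast; ring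
  rw [h1, h0]
  by_cases hu : u = 0
  · subst hu
    have e1 : ∫ t in (-1:ℝ)..0, ((1:ℂ) + t) = ((∫ t in (-1:ℝ)..0, (1 + t) : ℝ) : ℂ) := by
      rw [← intervalIntegral.integral_ofReal]; simp
    have e2 : ∫ t in (0:ℝ)..1, ((1:ℂ) - t) = ((∫ t in (0:ℝ)..1, (1 - t) : ℝ) : ℂ) := by
      rw [← intervalIntegral.integral_ofReal]; simp
    simp only [Complex.ofReal_zero, mul_zero, zero_mul, Complex.exp_zero, one_mul, e1, e2, sinc_zero]
    rw [intervalIntegral.integral_add (by simp) (by simp), intervalIntegral.integral_sub (by simp) (by simp)]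
    simp
    norm_num
  · set c : ℂ := -2 * π * u * Complex.I with hcdef
    have hc : c ≠ 0 := by simp [hcdef, hu, pi_ne_zero]
    have hexp : ∀ t : ℝ, HasDerivAt (fun t : ℝ => Complex.exp (c * t)) (Complex.exp (c * t) * c) t := by
      intro t
      have := ((Complex.ofRealCLM.hasDerivAt (x := t)).const_mul c).cexp
      simpa using this
    have hid : ∀ t : ℝ, HasDerivAt (fun t : ℝ => (t : ℂ)) 1 t := fun t => by
      simpa using (hasDerivAt_id t).ofReal_comp
    rw [intervalIntegral.integral_eq_sub_of_hasDerivAt (a := -1) (b := 0)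
      (f := fun t : ℝ => Complex.exp (c * t) * (1 + t) / c - Complex.exp (c * t) / c ^ 2),
      intervalIntegral.integral_eq_sub_of_hasDerivAt (a := 0) (b := 1)
      (f := fun t : ℝ => Complex.exp (c * t) * (1 - t) / c + Complex.exp (c * t) / c ^ 2)]
    · have hs : ((sinc (π * u) ^ 2 : ℝ) : ℂ) = (Complex.exp c + Complex.exp (-c) - 2) / c ^ 2 := by
        rw [sinc_of_ne_zero (by positivity)]
        have : Complex.exp c + Complex.exp (-c) = 2 * Complex.cos (2 * (π * u)) := by
          rw [Complex.two_cos, hcdef, add_comm]; congr 2 <;> ring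
        rw [this, Complex.cos_two_mul, hcdef]
        have hu' : (u : ℂ) ≠ 0 := by exact_mod_cast hu
        have hp : (π : ℂ) ≠ 0 := by exact_mod_cast pi_ne_zero
        have hcs := Complex.sin_sq_add_cos_sq (π * u)
        have : Complex.cos (π * u) ^ 2 = 1 - Complex.sin (π * u) ^ 2 := by rw [← hcs]; ring
        rw [this]
        push_cast
        field_simp
        simp only [Complex.I_sq]
        ring
      rw [hs]
      simp
      field_simp
      ring
    · intro t _
      convert! (((hexp t).mul ((hid t).const_sub 1)).div_const c).add ((hexp t).div_const (c^2)) using 1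
      field_simp
      ring
    · apply Continuous.intervalIntegrable; fun_prop
    · intro t _
      convert! (((hexp t).mul ((hid t).const_add 1)).div_const c).sub ((hexp t).div_const (c^2)) using 1
      field_simp
      ring
    · apply Continuous.intervalIntegrable; fun_prop

lemma sinc_sq_integrable : Integrable (fun u : ℝ => sinc (π * u) ^ 2) := by
  have hc : Continuous (fun u : ℝ => sinc (π * u) ^ 2) := by
    have := continuous_sinc
    fun_prop
  refine (integrable_inv_one_add_sq.const_mul 2).mono' hc.aestronglyMeasurable (ae_of_all _ fun u => ?_)
  rw [norm_of_nonneg (by positivity), ← div_eq_mul_inv, le_div_iff₀ (by positivity)]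
  have h1 : sinc (π * u) ^ 2 ≤ 1 := (sq_le_one_iff_abs_le_one _).mpr (abs_sinc_le_one _)
  have h2 : sinc (π * u) ^ 2 * u ^ 2 ≤ 1 := by
    by_cases hu : u = 0
    · simp [hu]
    rw [sinc_of_ne_zero (by positivity)]
    have h3 := sin_sq_le_one (π * u)
    have : (sin (π * u) / (π * u)) ^ 2 * u ^ 2 = sin (π * u) ^ 2 / π ^ 2 := by field_simp
    rw [this, div_le_one (by positivity)]
    nlinarith [pi_gt_three]
  linarith

lemma fejer_ft (ξ : ℝ) : ∫ u : ℝ, ((sinc (π * u) ^ 2 : ℝ) : ℂ) * Complex.exp (2 * π * Complex.I * ξ * u)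
    = ((max 0 (1 - |ξ|) : ℝ) : ℂ) := by
  have hc : Continuous (fun t : ℝ => ((max 0 (1 - |t|) : ℝ) : ℂ)) := by fun_prop
  have hi : Integrable (fun t : ℝ => ((max 0 (1 - |t|) : ℝ) : ℂ)) := by
    apply hc.integrable_of_hasCompactSupport
    apply HasCompactSupport.of_support_subset_isCompact (isCompact_Icc (a := -1) (b := 1))
    intro t ht
    rw [Set.mem_Icc, ← abs_le]
    by_contra h
    push Not at h
    apply ht
    simp only
    rw [max_eq_left (by linarith)]; simp
  have hft : FourierTransform.fourier (fun t : ℝ => ((max 0 (1 - |t|) : ℝ) : ℂ)) = fun u => ((sinc (π * u) ^ 2 : ℝ) : ℂ) :=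
    funext tri_ft
  have := hc.fourierInv_fourier_eq hi (by rw [hft]; exact sinc_sq_integrable.ofReal)
  rw [hft] at this
  have := congrFun this ξ
  rw [Real.fourierInv_eq'] at this
  rw [← this]
  congr 1; ext v
  rw [smul_eq_mul, mul_comm]
  congr 2
  simp
  ring

lemma tail_int (c : ℝ) (hc : 0 < c) :
    Integrable (fun u : ℝ => (Set.Ioi c).indicator (fun t => t ^ (-2 : ℝ)) |u|) ∧
    ∫ u : ℝ, (Set.Ioi c).indicator (fun t => t ^ (-2 : ℝ)) |u| = 2 / c := by
  constructor
  · refine (integrable_inv_one_add_sq.const_mul (1 + 1 / c ^ 2)).mono' ?_ (ae_of_all _ fun u => ?_)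
    · apply Measurable.aestronglyMeasurable
      apply Measurable.comp (g := (Set.Ioi c).indicator (fun t => t ^ (-2 : ℝ)))
      · exact Measurable.indicator (by fun_prop) measurableSet_Ioi
      · fun_prop
    · by_cases h : c < |u|
      · rw [Set.indicator_of_mem (by exact h), norm_of_nonneg (by positivity), rpow_neg (by positivity)]
        norm_cast
        rw [sq_abs]
        have : c ^ 2 < u ^ 2 := by rw [← sq_abs u]; gcongr
        have hu : 0 < u ^ 2 := by nlinarith
        rw [← div_eq_mul_inv, le_div_iff₀ (by positivity), mul_add, inv_mul_cancel₀ hu.ne', mul_one, add_comm]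
        rw [one_div]; gcongr
      · rw [Set.indicator_of_notMem (by exact h)]
        simp; positivity
  · rw [integral_comp_abs, setIntegral_indicator measurableSet_Ioi,
      Set.inter_eq_right.mpr (Set.Ioi_subset_Ioi hc.le), integral_Ioi_rpow_of_lt (by norm_num) hc]
    norm_num
    rw [rpow_neg_one]; ring

lemma scaled_ft (Λ : ℝ) (hΛ : 0 < Λ) (ξ : ℝ) :
    ∫ u : ℝ, ((Λ * sinc (π * (Λ * u)) ^ 2 : ℝ) : ℂ) * Complex.exp (2 * π * Complex.I * ξ * u)
    = ((max 0 (1 - |ξ| / Λ) : ℝ) : ℂ) := by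
  have h := Measure.integral_comp_mul_left (fun u : ℝ => ((sinc (π * u) ^ 2 : ℝ) : ℂ) *
    Complex.exp (2 * π * Complex.I * ((ξ / Λ : ℝ) : ℂ) * u)) Λ
  rw [fejer_ft, abs_div, abs_of_pos hΛ, abs_of_pos (inv_pos.mpr hΛ)] at h
  have hΛ' : (Λ : ℂ) ≠ 0 := by exact_mod_cast hΛ.ne'
  have e : ∀ u : ℝ, ((Λ * sinc (π * (Λ * u)) ^ 2 : ℝ) : ℂ) * Complex.exp (2 * π * Complex.I * ξ * u)
      = (Λ : ℂ) * (((sinc (π * (Λ * u)) ^ 2 : ℝ) : ℂ) *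
    Complex.exp (2 * π * Complex.I * ((ξ / Λ : ℝ) : ℂ) * ((Λ * u : ℝ) : ℂ))) := by
    intro u
    have : 2 * π * Complex.I * ((ξ / Λ : ℝ) : ℂ) * ((Λ * u : ℝ) : ℂ) = 2 * π * Complex.I * ξ * u := by
      push_cast; field_simp
    rw [this]; push_cast; ring
  simp_rw [e]
  rw [integral_const_mul, h, Complex.real_smul, Complex.ofReal_inv, mul_inv_cancel_left₀ hΛ']

lemma norm_cexp_two_pi (a b : ℝ) : ‖Complex.exp (2 * π * Complex.I * a * b)‖ = 1 := by
  have : 2 * π * Complex.I * a * b = ((2 * π * a * b : ℝ) : ℂ) * Complex.I := by push_cast; ring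
  rw [this, Complex.norm_exp_ofReal_mul_I]

lemma kernel_bound (Λ : ℝ) (hΛ : 0 < Λ) (u : ℝ) (hu : 0 < |u|) :
    Λ * sinc (π * (Λ * u)) ^ 2 ≤ 1 / (π ^ 2 * Λ) * |u| ^ (-2 : ℝ) := by
  have hu0 : u ≠ 0 := abs_pos.mp hu
  rw [rpow_neg hu.le]
  norm_cast
  rw [sq_abs, sinc_of_ne_zero (by positivity)]
  have h3 := sin_sq_le_one (π * (Λ * u))
  have e1 : Λ * (sin (π * (Λ * u)) / (π * (Λ * u))) ^ 2 = sin (π * (Λ * u)) ^ 2 * (1 / (π ^ 2 * Λ) * (u ^ 2)⁻¹) := by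
    field_simp
  rw [e1]
  have : 0 ≤ 1 / (π ^ 2 * Λ) * (u ^ 2)⁻¹ := by positivity
  nlinarith


theorem max_near_ge_smoothed
    (lam : ℕ → ℝ) (hlam : ∀ n, 0 ≤ lam n)
    (f : ℕ → ℝ) (hf : ∀ n, 0 ≤ f n) (hsum : Summable f)
    (Λ : ℝ) (hΛ : 0 < Λ)
    (F F₁ : ℝ → ℂ)
    (hF : ∀ x : ℝ, F x = ∑' n : ℕ, (f n : ℂ) * Complex.exp (2 * π * Complex.I * lam n * x))
    (hF₁ : ∀ x : ℝ, F₁ x = ∑' n : ℕ, (f n : ℂ) * Complex.exp (2 * π * Complex.I * lam n * x) *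
        ((max 0 (1 - |Λ - lam n| / Λ) : ℝ) : ℂ))
    (Y : ℝ) (hY : 1 ≤ Y) (β : ℝ) (x : ℝ) :
    sSup ((fun u => |(Complex.exp (Complex.I * β) * F (x + u)).re|) '' Set.Icc (-(Y / 2)) (Y / 2))
      ≥ (1 / 2) * (F₁ x).re - 4 * (F 0).re / (π ^ 2 * Y * Λ) := by

  set k : ℝ → ℝ := fun u => Λ * sinc (π * (Λ * u)) ^ 2 with hk
  have hk0 : ∀ u, 0 ≤ k u := fun u => by simp only [hk]; positivity
  have hkc : Continuous k := by
    have := continuous_sinc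
    simp only [hk]; fun_prop
  have hki : Integrable k := (sinc_sq_integrable.comp_mul_left' hΛ.ne').const_mul Λ
  have hkft : ∀ ξ : ℝ, ∫ u : ℝ, (k u : ℂ) * Complex.exp (2 * π * Complex.I * ξ * u)
    = ((max 0 (1 - |ξ| / Λ) : ℝ) : ℂ) := scaled_ft Λ hΛ
  have hkfi : ∀ ξ : ℝ, Integrable (fun u : ℝ => (k u : ℂ) * Complex.exp (2 * π * Complex.I * ξ * u)) := by
    intro ξ
    refine hki.mono' (by apply Continuous.aestronglyMeasurable; fun_prop) (ae_of_all _ fun u => ?_)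
    rw [norm_mul, norm_cexp_two_pi, mul_one, Complex.norm_real, norm_of_nonneg (hk0 u)]
  have hk1 : ∫ u, k u = 1 := by
    have := hkft 0
    simp only [Complex.ofReal_zero, mul_zero, zero_mul, Complex.exp_zero, mul_one, abs_zero, zero_div,
      sub_zero] at this
    have e : ∫ u, (k u : ℂ) = ((∫ u, k u : ℝ) : ℂ) := integral_ofReal
    rw [e, max_eq_right zero_le_one] at this
    exact_mod_cast this
  have hnorm : ∀ (n : ℕ) (y : ℝ), ‖(f n : ℂ) * Complex.exp (2 * π * Complex.I * lam n * y)‖ = f n := by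
    intro n y
    rw [norm_mul, norm_cexp_two_pi, mul_one, Complex.norm_real, norm_of_nonneg (hf n)]
  have hFs : ∀ y : ℝ, Summable (fun n => (f n : ℂ) * Complex.exp (2 * π * Complex.I * lam n * y)) := by
    intro y
    apply Summable.of_norm
    simp_rw [hnorm]; exact hsum
  have hF0 : (F 0).re = ∑' n, f n := by
    rw [hF]
    simp [← Complex.ofReal_tsum]
  have hFle : ∀ y, ‖F y‖ ≤ (F 0).re := by
    intro y
    rw [hF0, hF]
    refine (norm_tsum_le_tsum_norm ?_).trans ?_
    · simp_rw [hnorm]; exact hsum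
    · simp_rw [hnorm]; rfl
  have hF0n : 0 ≤ (F 0).re := (norm_nonneg _).trans (hFle 0)
  set R : ℝ → ℝ := fun u => (Complex.exp (Complex.I * β) * F (x + u)).re with hR
  have hβ : ‖Complex.exp (Complex.I * β)‖ = 1 := by
    rw [mul_comm, Complex.norm_exp_ofReal_mul_I]
  have hRle : ∀ u, |R u| ≤ (F 0).re := by
    intro u
    refine (Complex.abs_re_le_norm _).trans ?_
    rw [norm_mul, hβ, one_mul]; exact hFle _
  change sSup ((fun u => |R u|) '' _) ≥ _
  set M := sSup ((fun u => |R u|) '' Set.Icc (-(Y / 2)) (Y / 2)) with hM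
  have hbdd : BddAbove ((fun u => |R u|) '' Set.Icc (-(Y / 2)) (Y / 2)) := by
    refine ⟨(F 0).re, ?_⟩
    rintro _ ⟨u, _, rfl⟩
    exact hRle u
  have hMle : ∀ u, |u| ≤ Y / 2 → |R u| ≤ M := fun u hu =>
    le_csSup hbdd ⟨u, abs_le.mp hu, rfl⟩
  have hM0 : 0 ≤ M := (abs_nonneg _).trans (hMle 0 (by simp; linarith))
  -- terms of the smoothed series
  set G : ℕ → ℝ → ℂ := fun n u =>
    ((f n / 2 : ℝ) : ℂ) * (Complex.exp (2 * π * Complex.I * lam n * x) *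
        ((k u : ℂ) * Complex.exp (2 * π * Complex.I * ((lam n - Λ : ℝ) : ℂ) * u)) +
      Complex.exp (-(2 * (Complex.I * β))) * Complex.exp (2 * π * Complex.I * lam n * (-x : ℝ)) *
        ((k u : ℂ) * Complex.exp (2 * π * Complex.I * ((-(lam n + Λ) : ℝ) : ℂ) * u))) with hG
  have hGi : ∀ n, Integrable (G n) := by
    intro n
    exact ((((hkfi _).const_mul _).add ((hkfi _).const_mul _)).const_mul _)
  have hGint : ∀ n, ∫ u, G n u = (1 / 2 : ℂ) * ((f n : ℂ) * Complex.exp (2 * π * Complex.I * lam n * x) *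
        ((max 0 (1 - |Λ - lam n| / Λ) : ℝ) : ℂ)) := by
    intro n
    simp only [hG]
    rw [integral_const_mul, integral_add ((hkfi _).const_mul _) ((hkfi _).const_mul _),
      integral_const_mul, integral_const_mul, hkft, hkft, abs_sub_comm]
    have : max 0 (1 - |-(lam n + Λ)| / Λ) = 0 := by
      apply max_eq_left
      rw [abs_neg, abs_of_nonneg (by linarith [hlam n]), sub_nonpos, le_div_iff₀ hΛ]
      linarith [hlam n]
    rw [this]; push_cast; ring
  have hGn : ∀ n u, ‖G n u‖ ≤ f n * k u := by
    intro n u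
    have hβ2 : ‖Complex.exp (-(2 * (Complex.I * β)))‖ = 1 := by
      have : -(2 * (Complex.I * β)) = ((-2 * β : ℝ) : ℂ) * Complex.I := by push_cast; ring
      rw [this, Complex.norm_exp_ofReal_mul_I]
    simp only [hG]
    rw [norm_mul, Complex.norm_real, norm_of_nonneg (by linarith [hf n])]
    have hh : ∀ a b : ℂ, ‖a‖ ≤ k u → ‖b‖ ≤ k u → f n / 2 * ‖a + b‖ ≤ f n * k u := by
      intro a b ha hb
      have := norm_add_le a b
      have h2 : ‖a + b‖ ≤ 2 * k u := by linarith
      have := mul_le_mul_of_nonneg_left h2 (by linarith [hf n] : 0 ≤ f n / 2)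
      linarith
    apply hh
    · rw [norm_mul, norm_mul, norm_cexp_two_pi, norm_cexp_two_pi, Complex.norm_real, norm_of_nonneg (hk0 u)]
      simp
    · rw [norm_mul, norm_mul, norm_mul, hβ2, norm_cexp_two_pi, norm_cexp_two_pi, Complex.norm_real,
        norm_of_nonneg (hk0 u)]
      simp
  have hGs : Summable fun n => ∫ u, ‖G n u‖ := by
    refine Summable.of_nonneg_of_le (fun n => integral_nonneg fun u => norm_nonneg _) (fun n => ?_) hsum
    calc ∫ u, ‖G n u‖ ≤ ∫ u, f n * k u := integral_mono (hGi n).norm (hki.const_mul _) (hGn n)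
      _ = f n := by rw [integral_const_mul (f n), hk1, mul_one]
  have hswap := (hasSum_integral_of_summable_integral_norm hGi hGs).tsum_eq
  have hGsum : ∀ u : ℝ, ∑' n, G n u = (k u : ℂ) * (Complex.exp (-(Complex.I * β)) *
      Complex.exp (2 * π * Complex.I * ((-Λ : ℝ) : ℂ) * u)) * (R u : ℂ) := by
    intro u
    have hRe : (R u : ℂ) = ∑' n, ((Complex.exp (Complex.I * β) *
        ((f n : ℂ) * Complex.exp (2 * π * Complex.I * lam n * ((x + u : ℝ) : ℂ)))).re : ℂ) := by
      rw [← Complex.ofReal_tsum, ← Complex.re_tsum ((hFs (x+u)).mul_left _), tsum_mul_left, ← hF]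
    rw [hRe, ← tsum_mul_left]
    congr 1; ext n
    rw [Complex.re_eq_add_conj]
    simp only [map_mul, ← Complex.exp_conj, Complex.conj_I, Complex.conj_ofReal, hG, Complex.conj_ofNat]
    have e1 : Complex.exp (2 * π * Complex.I * lam n * x) *
        Complex.exp (2 * π * Complex.I * ((lam n - Λ : ℝ) : ℂ) * u) =
        Complex.exp (-(Complex.I * β)) * Complex.exp (2 * π * Complex.I * ((-Λ : ℝ) : ℂ) * u) *
        (Complex.exp (Complex.I * β) * Complex.exp (2 * π * Complex.I * lam n * ((x + u : ℝ) : ℂ))) := by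
      simp only [← Complex.exp_add]
      congr 1; push_cast; ring
    have e2 : Complex.exp (-(2 * (Complex.I * β))) * Complex.exp (2 * π * Complex.I * lam n * (-x : ℝ)) *
        Complex.exp (2 * π * Complex.I * ((-(lam n + Λ) : ℝ) : ℂ) * u) =
        Complex.exp (-(Complex.I * β)) * Complex.exp (2 * π * Complex.I * ((-Λ : ℝ) : ℂ) * u) *
        (Complex.exp (-Complex.I * β) * Complex.exp (2 * π * -Complex.I * lam n * ((x + u : ℝ) : ℂ))) := by
      simp only [← Complex.exp_add]
      congr 1; push_cast; ring
    rw [Complex.ofReal_div, Complex.ofReal_ofNat]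
    linear_combination ((f n : ℂ) / 2 * k u) * e1 + ((f n : ℂ) / 2 * k u) * e2
  obtain ⟨hTi, hT⟩ := tail_int (Y / 2) (by linarith)
  set T : ℝ → ℝ := fun u : ℝ => (Set.Ioi (Y / 2)).indicator (fun t => t ^ (-2 : ℝ)) |u| with hTdef
  have hbound : ‖∫ u, ∑' n, G n u‖ ≤ ∫ u, (M * k u + (F 0).re / (π ^ 2 * Λ) * T u) := by
    refine norm_integral_le_of_norm_le ((hki.const_mul _).add (hTi.const_mul _)) (ae_of_all _ fun u => ?_)
    have hβ3 : ‖Complex.exp (-(Complex.I * β))‖ = 1 := by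
      have : -(Complex.I * β) = ((-β : ℝ) : ℂ) * Complex.I := by push_cast; ring
      rw [this, Complex.norm_exp_ofReal_mul_I]
    rw [hGsum, norm_mul, norm_mul, norm_mul, hβ3, norm_cexp_two_pi, Complex.norm_real, Complex.norm_real,
      norm_of_nonneg (hk0 u), mul_one, mul_one, norm_eq_abs]
    by_cases hu : |u| ≤ Y / 2
    · have : T u = 0 := Set.indicator_of_notMem (by simpa using hu) _
      rw [this, mul_zero, add_zero, mul_comm]
      exact mul_le_mul_of_nonneg_right (hMle u hu) (hk0 u)
    · push Not at hu
      have hT' : T u = |u| ^ (-2 : ℝ) := Set.indicator_of_mem (by exact hu) _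
      have hb := kernel_bound Λ hΛ u (by linarith)
      rw [hT']
      have : k u * |R u| ≤ 1 / (π ^ 2 * Λ) * |u| ^ (-2 : ℝ) * (F 0).re :=
        mul_le_mul hb (hRle u) (abs_nonneg _) (by positivity)
      have h2 := mul_nonneg hM0 (hk0 u)
      calc _ ≤ _ := this
        _ = (F 0).re / (π ^ 2 * Λ) * |u| ^ (-2 : ℝ) := by ring
        _ ≤ _ := by linarith
  rw [integral_add (hki.const_mul _) (hTi.const_mul _), integral_const_mul M, integral_const_mul _ T, hk1, hT,
    ← hswap] at hbound
  simp_rw [hGint] at hbound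
  rw [tsum_mul_left, ← hF₁] at hbound
  have h1 := (Complex.re_le_norm _).trans hbound
  have h2 : ((1 / 2 : ℂ) * F₁ x).re = 1 / 2 * (F₁ x).re := by
    simp [Complex.mul_re]
  rw [h2] at h1
  have h3 : (F 0).re / (π ^ 2 * Λ) * (2 / (Y / 2)) = 4 * (F 0).re / (π ^ 2 * Y * Λ) := by
    field_simp; ring
  rw [h3] at h1
  linarith
end

section
/- Let F(x) = ∑_{n≥1} f(n) e^{2πi λ_n x} with f(n) ≥ 0, ∑ f(n) < ∞, 0 ≤ λ₁ < λ₂ < .... Let M, N ≥ 1 be integers, 𝓜 ⊆ ℕ with |𝓜| = M such that 2|λ_m − λ_N| ≤ λ_N for all m ∈ 𝓜, β ∈ ℝ, and 2^M X > Y ≥ 1. Then max_{x ∈ [Y/2, 2^{M+1} X]} |Re(e^{iβ} F(x))| ≥ (1/16) ∑_{m ∈ 𝓜} f(m) − 4F(0)/(π² Y λ_N) + O(Y(M + log X)/X · ∑_{λ_n ≤ 2λ_N} f(n)). -/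
set_option autoImplicit false
open Real MeasureTheory

lemma ker_int (T c : ℝ) (hT : 0 < T) (hc : c ≠ 0) :
    ∫ x in (0:ℝ)..T, (1 - x / T) * Real.cos (c * x) = (1 - Real.cos (c * T)) / (c ^ 2 * T) := by
  have hd : ∀ x ∈ Set.uIcc (0:ℝ) T, HasDerivAt
      (fun x => (1 - x / T) * (Real.sin (c * x) / c) - Real.cos (c * x) / (c ^ 2 * T))
      ((1 - x / T) * Real.cos (c * x)) x := by
    intro x _
    have h1 : HasDerivAt (fun x : ℝ => c * x) c x := by
      simpa using (hasDerivAt_id x).const_mul c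
    have h2 : HasDerivAt (fun x : ℝ => 1 - x / T) (-(1 / T)) x := by
      simpa using ((hasDerivAt_id x).div_const T).const_sub 1
    have h3 := (h2.mul (h1.sin.div_const c)).sub (h1.cos.div_const (c ^ 2 * T))
    refine h3.congr_deriv ?_
    field_simp
    ring
  rw [intervalIntegral.integral_eq_sub_of_hasDerivAt hd]
  · simp
    field_simp
    ring
  · apply Continuous.intervalIntegrable
    fun_prop

lemma ker_int0 (T : ℝ) (hT : 0 < T) :
    ∫ x in (0:ℝ)..T, (1 - x / T) = T / 2 := by
  rw [intervalIntegral.integral_sub (by simp) (by apply Continuous.intervalIntegrable; fun_prop)]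
  simp
  field_simp
  ring

lemma ker_nonneg (T c : ℝ) (hT : 0 < T) :
    0 ≤ ∫ x in (0:ℝ)..T, (1 - x / T) * Real.cos (c * x) := by
  by_cases hc : c = 0
  · subst hc
    simp only [zero_mul, Real.cos_zero, mul_one]
    rw [ker_int0 T hT]; positivity
  · rw [ker_int T c hT hc]
    have := Real.cos_le_one (c * T)
    apply div_nonneg (by linarith) (by positivity)

lemma prod_nonneg' (T : ℝ) (hT : 0 < T) (a : ℕ → ℝ) (s : Finset ℕ) : ∀ b : ℝ,
    0 ≤ ∫ x in (0:ℝ)..T, (1 - x / T) * (Real.cos (b * x) * ∏ m ∈ s, (1 + Real.cos (a m * x))) := by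
  classical
  induction s using Finset.induction_on with
  | empty => intro b; simpa using ker_nonneg T b hT
  | insert m s hm ih =>
    intro b
    have key : ∀ x : ℝ, (1 - x / T) * (Real.cos (b * x) * ∏ m ∈ insert m s, (1 + Real.cos (a m * x)))
      = ((1 - x / T) * (Real.cos (b * x) * ∏ m ∈ s, (1 + Real.cos (a m * x)))
        + (1/2) * ((1 - x / T) * (Real.cos ((b + a m) * x) * ∏ m ∈ s, (1 + Real.cos (a m * x)))))
        + (1/2) * ((1 - x / T) * (Real.cos ((b - a m) * x) * ∏ m ∈ s, (1 + Real.cos (a m * x)))) := by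
      intro x
      rw [Finset.prod_insert hm, add_mul b, sub_mul b, Real.cos_add, Real.cos_sub]
      ring
    simp_rw [key]
    rw [intervalIntegral.integral_add, intervalIntegral.integral_add,
      intervalIntegral.integral_const_mul, intervalIntegral.integral_const_mul]
    · linarith [ih b, ih (b + a m), ih (b - a m)]
    all_goals (apply Continuous.intervalIntegrable; fun_prop)

lemma prod_ge (T : ℝ) (hT : 0 < T) (a : ℕ → ℝ) (s : Finset ℕ) :
    T / 2 ≤ ∫ x in (0:ℝ)..T, (1 - x / T) * (∏ m ∈ s, (1 + Real.cos (a m * x))) := by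
  classical
  induction s using Finset.induction_on with
  | empty => simpa using (ker_int0 T hT).ge
  | insert m s hm ih =>
    have key : ∀ x : ℝ, (1 - x / T) * (∏ m ∈ insert m s, (1 + Real.cos (a m * x)))
      = ((1 - x / T) * (∏ m ∈ s, (1 + Real.cos (a m * x)))
        + ((1 - x / T) * (Real.cos (a m * x) * ∏ m ∈ s, (1 + Real.cos (a m * x))))) := by
      intro x
      rw [Finset.prod_insert hm]
      ring
    simp_rw [key]
    rw [intervalIntegral.integral_add]
    · linarith [prod_nonneg' T hT a s (a m)]
    all_goals (apply Continuous.intervalIntegrable; fun_prop)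

lemma prod_half (T : ℝ) (hT : 0 < T) (a : ℕ → ℝ) (s : Finset ℕ) (m : ℕ) (hm : m ∈ s) :
    (1 / 2) * (∫ x in (0:ℝ)..T, (1 - x / T) * (∏ m ∈ s, (1 + Real.cos (a m * x)))) ≤
    ∫ x in (0:ℝ)..T, (1 - x / T) * (Real.cos (a m * x) * ∏ m ∈ s, (1 + Real.cos (a m * x))) := by
  classical
  have key : ∀ x : ℝ, (1 - x / T) * (Real.cos (a m * x) * ∏ m ∈ s, (1 + Real.cos (a m * x)))
      = ((1/2) * ((1 - x / T) * (∏ m ∈ s, (1 + Real.cos (a m * x))))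
        + (1/2) * ((1 - x / T) * (Real.cos (a m * x) * ∏ m ∈ s.erase m, (1 + Real.cos (a m * x)))))
        + (1/2) * ((1 - x / T) * (Real.cos ((2 * a m) * x) * ∏ m ∈ s.erase m, (1 + Real.cos (a m * x)))) := by
    intro x
    rw [← Finset.mul_prod_erase s _ hm, mul_assoc 2, Real.cos_two_mul]
    ring
  simp_rw [key]
  rw [intervalIntegral.integral_add, intervalIntegral.integral_add,
      intervalIntegral.integral_const_mul, intervalIntegral.integral_const_mul,
      intervalIntegral.integral_const_mul]
  · linarith [prod_nonneg' T hT a (s.erase m) (a m), prod_nonneg' T hT a (s.erase m) (2 * a m)]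
  all_goals (apply Continuous.intervalIntegrable; fun_prop)

noncomputable def triF (x : ℝ) : ℝ := max 0 (1 - |x|)

noncomputable def fejK (u : ℝ) : ℝ :=
  if u = 0 then 1 else (1 - Real.cos (2 * π * u)) / (2 * π ^ 2 * u ^ 2)

lemma triF_cont : Continuous triF := by unfold triF; fun_prop

lemma triF_zero {x : ℝ} (h : 1 ≤ |x|) : triF x = 0 := by
  unfold triF; exact max_eq_left (by linarith)

lemma triF_supp : Function.support triF ⊆ Set.Ioc (-1) 1 := by
  intro x hx
  by_contra h
  apply hx
  apply triF_zero
  by_contra h2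
  push Not at h2
  rw [abs_lt] at h2
  exact h ⟨h2.1, h2.2.le⟩

lemma fejK_nonneg (u : ℝ) : 0 ≤ fejK u := by
  unfold fejK
  split_ifs
  · norm_num
  · have := Real.cos_le_one (2 * π * u)
    apply div_nonneg (by linarith) (by positivity)

lemma fejK_le_one (u : ℝ) : fejK u ≤ 1 := by
  unfold fejK
  split_ifs with h
  · norm_num
  · have := Real.one_sub_sq_div_two_le_cos (x := 2 * π * u)
    rw [div_le_one (by positivity)]
    nlinarith

lemma fejK_le_inv (u : ℝ) (h : u ≠ 0) : fejK u ≤ (π ^ 2)⁻¹ * (u ^ 2)⁻¹ := by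
  unfold fejK
  rw [if_neg h, ← mul_inv, div_le_iff₀ (by positivity)]
  have := Real.neg_one_le_cos (2 * π * u)
  have : (π ^ 2 * u ^ 2)⁻¹ * (2 * π ^ 2 * u ^ 2) = 2 := by field_simp
  linarith

lemma fejK_meas : Measurable fejK := by
  unfold fejK
  apply Measurable.ite (measurableSet_singleton 0) measurable_const
  fun_prop

lemma fejK_integrable : Integrable fejK := by
  refine Integrable.mono' (integrable_inv_one_add_sq.const_mul 2) fejK_meas.aestronglyMeasurable ?_
  filter_upwards with u
  rw [Real.norm_of_nonneg (fejK_nonneg u), ← div_eq_mul_inv, le_div_iff₀ (by positivity)]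
  have h1 := fejK_le_one u
  by_cases hu : u = 0
  · subst hu; simp; linarith
  · have h2 := fejK_le_inv u hu
    have h3 : fejK u * u ^ 2 ≤ 1 := by
      calc fejK u * u ^ 2 ≤ (π ^ 2)⁻¹ * (u ^ 2)⁻¹ * u ^ 2 := by gcongr
        _ = (π ^ 2)⁻¹ := by field_simp
        _ ≤ 1 := by
          apply inv_le_one_of_one_le₀
          nlinarith [Real.pi_gt_three]
    linarith

open FourierTransform in
lemma fourier_tri (u : ℝ) : 𝓕 (fun x : ℝ => (triF x : ℂ)) u = (fejK u : ℂ) := by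
  rw [Real.fourier_real_eq_integral_exp_smul]
  simp only [smul_eq_mul]
  rw [← intervalIntegral.integral_eq_integral_of_support_subset (a := -1) (b := 1)]
  swap
  · intro x hx
    apply triF_supp
    intro h
    apply hx
    simp [h]
  have hc : Continuous (fun v : ℝ => Complex.exp (↑(-2 * π * v * u) * Complex.I) * (triF v : ℂ)) := by
    have := triF_cont
    fun_prop
  rw [← intervalIntegral.integral_add_adjacent_intervals (b := 0)
    (hc.intervalIntegrable _ _) (hc.intervalIntegrable _ _)]
  have h1 := intervalIntegral.integral_comp_neg (a := 0) (b := 1)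
    (fun v : ℝ => Complex.exp (↑(-2 * π * v * u) * Complex.I) * (triF v : ℂ))
  rw [neg_zero] at h1
  rw [← h1, ← intervalIntegral.integral_add]
  rotate_left
  · exact (hc.comp continuous_neg).intervalIntegrable _ _
  · exact hc.intervalIntegrable _ _
  have h2 : ∀ v ∈ Set.uIcc (0:ℝ) 1,
      Complex.exp (↑(-2 * π * (-v) * u) * Complex.I) * (triF (-v) : ℂ) +
      Complex.exp (↑(-2 * π * v * u) * Complex.I) * (triF v : ℂ) =
      ((2 * ((1 - v / 1) * Real.cos ((2 * π * u) * v)) : ℝ) : ℂ) := by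
    intro v hv
    rw [Set.uIcc_of_le zero_le_one] at hv
    have e1 : triF v = 1 - v := by
      unfold triF
      rw [abs_of_nonneg hv.1]; exact max_eq_right (by linarith [hv.2])
    have e2 : triF (-v) = 1 - v := by
      rw [← e1]; unfold triF; rw [abs_neg]
    rw [e1, e2]
    have e3 : (-2 * π * (-v) * u) = (2 * π * u) * v := by ring
    have e4 : (-2 * π * v * u) = -((2 * π * u) * v) := by ring
    rw [e3, e4]
    generalize (2 * π * u) * v = w
    push_cast
    rw [div_one, Complex.cos, neg_mul]
    ring
  rw [intervalIntegral.integral_congr h2, intervalIntegral.integral_ofReal,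
    intervalIntegral.integral_const_mul]
  congr 1
  by_cases hu : u = 0
  · subst hu
    simp only [mul_zero, zero_mul, Real.cos_zero, mul_one]
    rw [ker_int0 1 one_pos]
    simp [fejK]
  · rw [ker_int 1 (2 * π * u) one_pos (by positivity)]
    unfold fejK
    rw [if_neg hu]
    field_simp

open FourierTransform in
lemma fej_int_exp (ξ : ℝ) :
    ∫ v : ℝ, Complex.exp (↑(2 * π * ξ * v) * Complex.I) * (fejK v : ℂ) = (triF ξ : ℂ) := by
  have hF : 𝓕 (fun x : ℝ => (triF x : ℂ)) = fun u => (fejK u : ℂ) := funext fourier_tri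
  have hc : Continuous (fun x : ℝ => (triF x : ℂ)) := by
    have := triF_cont
    fun_prop
  have hi : Integrable (fun x : ℝ => (triF x : ℂ)) := by
    apply hc.integrable_of_hasCompactSupport
    apply HasCompactSupport.of_support_subset_isCompact (isCompact_Icc (a := (-1:ℝ)) (b := 1))
    intro x hx
    apply Set.Ioc_subset_Icc_self
    apply triF_supp
    intro h
    apply hx
    simp [h]
  have h := congrFun (hc.fourierInv_fourier_eq hi (by rw [hF]; exact fejK_integrable.ofReal)) ξ
  rw [hF, Real.fourierInv_eq'] at h
  rw [← h]
  congr 1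
  ext v
  simp only [smul_eq_mul]
  congr 4
  simp
  ring

lemma fej_int_cos (α ξ : ℝ) :
    ∫ v : ℝ, Real.cos (α + 2 * π * ξ * v) * fejK v = Real.cos α * triF ξ := by
  have h := fej_int_exp ξ
  have h2 := congrArg (fun z => (Complex.exp (α * Complex.I) * z).re) h
  rw [← integral_const_mul] at h2
  have hint : Integrable (fun v : ℝ => Complex.exp (α * Complex.I) *
      (Complex.exp (↑(2 * π * ξ * v) * Complex.I) * (fejK v : ℂ))) := by
    apply Integrable.const_mul
    apply Integrable.mono (fejK_integrable.ofReal (𝕜 := ℂ))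
    · apply AEStronglyMeasurable.mul
      · apply Continuous.aestronglyMeasurable; fun_prop
      · exact fejK_integrable.ofReal.aestronglyMeasurable
    · filter_upwards with v
      rw [norm_mul, Complex.norm_exp_ofReal_mul_I, one_mul]
      rfl
  rw [← RCLike.re_eq_complex_re, ← integral_re hint] at h2
  rw [Complex.exp_mul_I, ← Complex.ofReal_cos, ← Complex.ofReal_sin] at h2
  simp only [RCLike.re_eq_complex_re] at h2
  have e2 : (((Real.cos α : ℂ) + Real.sin α * Complex.I) * (triF ξ : ℂ)).re = Real.cos α * triF ξ := by
    simp [-Complex.ofReal_cos, -Complex.ofReal_sin]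
  rw [e2] at h2
  rw [← h2]
  congr 1
  ext v
  rw [Complex.exp_mul_I, ← Complex.ofReal_cos, ← Complex.ofReal_sin, Real.cos_add]
  simp only [Complex.mul_re, Complex.add_re, Complex.add_im, Complex.mul_im, Complex.ofReal_re,
    Complex.ofReal_im, Complex.I_re, Complex.I_im]
  ring

lemma fej_int_one : ∫ v : ℝ, fejK v = 1 := by
  have := fej_int_cos 0 0
  simpa [triF] using this

noncomputable def tailQ (a v : ℝ) : ℝ := (Set.Ioi a).indicator (fun v => (π ^ 2)⁻¹ * (v ^ 2)⁻¹) v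

lemma tailQ_nonneg (a v : ℝ) : 0 ≤ tailQ a v := by
  unfold tailQ
  apply Set.indicator_nonneg
  intro x _; positivity

lemma tailQ_aux (a : ℝ) (ha : 0 < a) : Set.EqOn (fun v : ℝ => (π ^ 2)⁻¹ * v ^ (-2:ℝ))
    (fun v => (π ^ 2)⁻¹ * (v ^ 2)⁻¹) (Set.Ioi a) := by
  intro v hv
  have : 0 < v := ha.trans hv
  simp only
  rw [Real.rpow_neg this.le, Real.rpow_two]

lemma tailQ_integrable (a : ℝ) (ha : 0 < a) : Integrable (tailQ a) := by
  unfold tailQ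
  rw [integrable_indicator_iff measurableSet_Ioi]
  refine IntegrableOn.congr_fun ?_ (tailQ_aux a ha) measurableSet_Ioi
  exact (integrableOn_Ioi_rpow_of_lt (by norm_num) ha).const_mul _

lemma tailQ_int (a : ℝ) (ha : 0 < a) : ∫ v, tailQ a v = 1 / (π ^ 2 * a) := by
  unfold tailQ
  rw [integral_indicator measurableSet_Ioi, ← setIntegral_congr_fun measurableSet_Ioi (tailQ_aux a ha),
    integral_const_mul, integral_Ioi_rpow_of_lt (by norm_num) ha]
  norm_num
  rw [Real.rpow_neg_one]
  ring

/-- The band-limiting step. -/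
lemma step_one (lam f : ℕ → ℝ) (hl : ∀ n, 0 ≤ lam n) (hf : ∀ n, 0 ≤ f n) (hs : Summable f)
    (g : ℝ → ℝ) (β : ℝ)
    (hg : ∀ x, HasSum (fun n => f n * Real.cos (β + 2 * π * lam n * x)) (g x))
    (L Y S x : ℝ) (hL : 0 < L) (hY : 0 < Y)
    (hS : ∀ u, |u| ≤ Y / 2 → |g (x + u)| ≤ S) :
    ∑' n, f n * triF (lam n / L - 1) * Real.cos (2 * π * lam n * x) ≤
      2 * (S + 4 * (∑' n, f n) / (π ^ 2 * Y * L)) := by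
  have hS0 : 0 ≤ S := (abs_nonneg _).trans (hS 0 (by simp; positivity))
  have hF0 : 0 ≤ ∑' n, f n := tsum_nonneg hf
  have hgle : ∀ x, |g x| ≤ ∑' n, f n := by
    intro x
    rw [← (hg x).tsum_eq, ← Real.norm_eq_abs]
    refine tsum_of_norm_bounded hs.hasSum ?_
    intro n
    rw [norm_mul, Real.norm_of_nonneg (hf n), Real.norm_eq_abs]
    exact mul_le_of_le_one_right (hf n) (Real.abs_cos_le_one _)
  have hcosint : ∀ α ξ : ℝ, Integrable (fun v => Real.cos (α + 2 * π * ξ * v) * fejK v) := by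
    intro α ξ
    refine fejK_integrable.mono' ?_ ?_
    · exact (Continuous.aestronglyMeasurable (by fun_prop)).mul fejK_meas.aestronglyMeasurable
    · filter_upwards with v
      rw [norm_mul, Real.norm_of_nonneg (fejK_nonneg v), Real.norm_eq_abs]
      exact mul_le_of_le_one_left (fejK_nonneg v) (Real.abs_cos_le_one _)
  have hsum := hasSum_integral_of_dominated_convergence (μ := volume)
    (F := fun n v => f n * Real.cos (β + 2 * π * lam n * (x + v / L)) *
      (Real.cos (2 * π * v + β) * fejK v))
    (f := fun v => g (x + v / L) * (Real.cos (2 * π * v + β) * fejK v))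
    (fun n v => f n * fejK v)
    (fun n => by
      have := fejK_meas
      apply Measurable.aestronglyMeasurable
      fun_prop)
    (fun n => by
      filter_upwards with v
      rw [norm_mul, norm_mul, norm_mul, Real.norm_of_nonneg (hf n),
        Real.norm_of_nonneg (fejK_nonneg v)]
      simp only [Real.norm_eq_abs]
      have h1 := Real.abs_cos_le_one (β + 2 * π * lam n * (x + v / L))
      have h2 := Real.abs_cos_le_one (2 * π * v + β)
      have := hf n
      have := fejK_nonneg v
      apply mul_le_mul
      · exact mul_le_of_le_one_right (hf n) h1
      · exact mul_le_of_le_one_left (fejK_nonneg v) h2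
      · positivity
      · positivity)
    (by
      filter_upwards with v
      exact hs.mul_right _)
    (by
      simp_rw [tsum_mul_right]
      exact fejK_integrable.const_mul _)
    (by
      filter_upwards with v
      exact (hg _).mul_right _)
  have hterm : ∀ n, ∫ v, f n * Real.cos (β + 2 * π * lam n * (x + v / L)) *
      (Real.cos (2 * π * v + β) * fejK v) =
      (1 / 2) * (f n * triF (lam n / L - 1) * Real.cos (2 * π * lam n * x)) := by
    intro n
    have e : ∀ v, f n * Real.cos (β + 2 * π * lam n * (x + v / L)) *
      (Real.cos (2 * π * v + β) * fejK v) =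
      (f n / 2) * (Real.cos (2 * π * lam n * x + 2 * π * (lam n / L - 1) * v) * fejK v) +
      (f n / 2) * (Real.cos ((2 * β + 2 * π * lam n * x) + 2 * π * (lam n / L + 1) * v) * fejK v) := by
      intro v
      have h1 : 2 * π * lam n * x + 2 * π * (lam n / L - 1) * v =
        (β + 2 * π * lam n * (x + v / L)) - (2 * π * v + β) := by ring
      have h2 : (2 * β + 2 * π * lam n * x) + 2 * π * (lam n / L + 1) * v =
        (β + 2 * π * lam n * (x + v / L)) + (2 * π * v + β) := by ring
      rw [h1, h2, Real.cos_add _ (2 * π * v + β), Real.cos_sub _ (2 * π * v + β)]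
      ring
    simp_rw [e]
    rw [integral_add ((hcosint _ _).const_mul _) ((hcosint _ _).const_mul _),
      integral_const_mul, integral_const_mul, fej_int_cos, fej_int_cos,
      triF_zero (x := lam n / L + 1)]
    · ring
    · have : 0 ≤ lam n / L := div_nonneg (hl n) hL.le
      rw [abs_of_nonneg (by linarith)]; linarith
  simp_rw [hterm] at hsum
  have hA := hsum.tsum_eq
  rw [tsum_mul_left] at hA
  set a := L * Y / 2 with ha_def
  have ha : 0 < a := by positivity
  have hQ := tailQ_integrable a ha
  have hQ' : Integrable (fun v => tailQ a (-v)) := hQ.comp_neg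
  have hQQ : Integrable (fun v => tailQ a v + tailQ a (-v)) := hQ.add hQ'
  have hb : ∫ v, g (x + v / L) * (Real.cos (2 * π * v + β) * fejK v) ≤
      ∫ v, (S * fejK v + (∑' n, f n) * (tailQ a v + tailQ a (-v))) := by
    refine (le_abs_self _).trans ?_
    rw [← Real.norm_eq_abs]
    refine norm_integral_le_of_norm_le ((fejK_integrable.const_mul S).add (hQQ.const_mul _)) ?_
    filter_upwards with v
    have hKn := fejK_nonneg v
    have hq1 := tailQ_nonneg a v
    have hq2 := tailQ_nonneg a (-v)
    have h0 : ‖g (x + v / L) * (Real.cos (2 * π * v + β) * fejK v)‖ ≤ |g (x + v / L)| * fejK v := by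
      rw [norm_mul, norm_mul, Real.norm_of_nonneg hKn]
      simp only [Real.norm_eq_abs]
      gcongr
      exact mul_le_of_le_one_left hKn (Real.abs_cos_le_one _)
    refine h0.trans ?_
    by_cases hv : |v| ≤ a
    · have h1 : |g (x + v / L)| ≤ S := by
        apply hS
        rw [abs_div, abs_of_pos hL, div_le_iff₀ hL]
        linarith
      have : |g (x + v / L)| * fejK v ≤ S * fejK v := by gcongr
      have : 0 ≤ (∑' n, f n) * (tailQ a v + tailQ a (-v)) := by positivity
      linarith
    · have hv0 : v ≠ 0 := by
        rintro rfl; simp at hv; linarith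
      have hK : fejK v ≤ tailQ a v + tailQ a (-v) := by
        have hle := fejK_le_inv v hv0
        push Not at hv
        rcases lt_abs.1 hv with h | h
        · have : tailQ a v = (π ^ 2)⁻¹ * (v ^ 2)⁻¹ := by
            unfold tailQ; rw [Set.indicator_of_mem (Set.mem_Ioi.2 h)]
          linarith
        · have : tailQ a (-v) = (π ^ 2)⁻¹ * (v ^ 2)⁻¹ := by
            unfold tailQ; rw [Set.indicator_of_mem (Set.mem_Ioi.2 h), neg_sq]
          linarith
      have : |g (x + v / L)| * fejK v ≤ (∑' n, f n) * (tailQ a v + tailQ a (-v)) :=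
        mul_le_mul (hgle _) hK hKn hF0
      have : 0 ≤ S * fejK v := by positivity
      linarith
  have hval : ∫ v, (S * fejK v + (∑' n, f n) * (tailQ a v + tailQ a (-v))) =
      S + 4 * (∑' n, f n) / (π ^ 2 * Y * L) := by
    rw [integral_add (fejK_integrable.const_mul S) (hQQ.const_mul _), integral_const_mul,
      integral_const_mul, integral_add hQ hQ', integral_neg_eq_self (tailQ a), tailQ_int a ha, fej_int_one,
      ha_def]
    field_simp
    ring
  rw [hval] at hb
  linarith

lemma triF_nonneg (x : ℝ) : 0 ≤ triF x := le_max_left _ _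

lemma triF_le_one (x : ℝ) : triF x ≤ 1 := by
  unfold triF
  exact max_le zero_le_one (by linarith [abs_nonneg x])

/-- The resonance step. -/
lemma step_two (lam f : ℕ → ℝ) (hf : ∀ n, 0 ≤ f n) (hs : Summable f)
    (w : ℕ → ℝ) (hw0 : ∀ n, 0 ≤ w n) (s : Finset ℕ) (hws : ∀ m ∈ s, 1 / 2 ≤ w m)
    (W : ℝ) (hfw : Summable (fun n => f n * w n)) (hW : ∑' n, f n * w n ≤ W)
    (B T Y : ℝ) (hB : 0 ≤ B) (hY : 0 < Y) (hYT : Y < T)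
    (hH : ∀ x ∈ Set.Icc Y T, ∑' n, f n * w n * Real.cos (2 * π * lam n * x) ≤ B) :
    (1 / 4) * ∑ m ∈ s, f m ≤ B + 2 * (W * 2 ^ s.card * Y) / T := by
  have hT : 0 < T := hY.trans hYT
  have hfw0 : ∀ n, 0 ≤ f n * w n := fun n => mul_nonneg (hf n) (hw0 n)
  set P : ℝ → ℝ := fun x => ∏ m ∈ s, (1 + Real.cos (2 * π * lam m * x)) with hP
  set H : ℝ → ℝ := fun x => ∑' n, f n * w n * Real.cos (2 * π * lam n * x) with hHdef
  have hPc : Continuous P := by simp only [hP]; fun_prop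
  have hP0 : ∀ x, 0 ≤ P x := fun x => Finset.prod_nonneg fun m _ => by
    linarith [Real.neg_one_le_cos (2 * π * lam m * x)]
  have hP2 : ∀ x, P x ≤ 2 ^ s.card := fun x => by
    have : P x ≤ ∏ m ∈ s, (2:ℝ) := Finset.prod_le_prod
      (fun m _ => by linarith [Real.neg_one_le_cos (2 * π * lam m * x)])
      (fun m _ => by linarith [Real.cos_le_one (2 * π * lam m * x)])
    simpa using this
  have hbd : ∀ n x, ‖f n * w n * Real.cos (2 * π * lam n * x)‖ ≤ f n * w n := by
    intro n x
    rw [norm_mul, Real.norm_of_nonneg (hfw0 n), Real.norm_eq_abs]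
    exact mul_le_of_le_one_right (hfw0 n) (Real.abs_cos_le_one _)
  have hHc : Continuous H := continuous_tsum (fun n => by fun_prop) hfw hbd
  have hHle : ∀ x, H x ≤ W := fun x => by
    refine le_trans ?_ hW
    exact (le_abs_self _).trans (tsum_of_norm_bounded hfw.hasSum (fun n => hbd n x))
  have hHs : ∀ x, HasSum (fun n => f n * w n * Real.cos (2 * π * lam n * x)) (H x) := fun x =>
    (Summable.of_norm_bounded hfw (fun n => hbd n x)).hasSum
  have hsum := intervalIntegral.hasSum_integral_of_dominated_convergence (μ := volume)
    (a := 0) (b := T)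
    (F := fun n x => f n * w n * Real.cos (2 * π * lam n * x) * ((1 - x / T) * P x))
    (f := fun x => H x * ((1 - x / T) * P x))
    (fun n _ => f n * w n * (2 ^ s.card))
    (fun n => Continuous.aestronglyMeasurable (by fun_prop))
    (fun n => by
      filter_upwards with x hx
      rw [Set.uIoc_of_le hT.le] at hx
      have h1 : x / T ≤ 1 := (div_le_one hT).2 hx.2
      have h2 : 0 < x / T := div_pos hx.1 hT
      rw [norm_mul, norm_mul (1 - x / T), Real.norm_of_nonneg (hP0 x),
        Real.norm_of_nonneg (by linarith : 0 ≤ 1 - x / T)]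
      refine mul_le_mul (hbd n x) ?_ (mul_nonneg (by linarith) (hP0 x)) (hfw0 n)
      calc (1 - x / T) * P x ≤ 1 * P x := by
            apply mul_le_mul_of_nonneg_right _ (hP0 x); linarith
        _ ≤ _ := by rw [one_mul]; exact hP2 x)
    (by filter_upwards with x _; exact hfw.mul_right _)
    (by simp)
    (by filter_upwards with x _; exact (hHs x).mul_right _)
  set Z := ∫ x in (0:ℝ)..T, (1 - x / T) * P x with hZ
  have hZT : T / 2 ≤ Z := prod_ge T hT (fun m => 2 * π * lam m) s
  have hterm : ∀ n, ∫ x in (0:ℝ)..T, f n * w n * Real.cos (2 * π * lam n * x) * ((1 - x / T) * P x) =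
      f n * w n * ∫ x in (0:ℝ)..T, (1 - x / T) * (Real.cos (2 * π * lam n * x) * P x) := by
    intro n
    rw [← intervalIntegral.integral_const_mul]
    congr 1; ext x; ring
  simp_rw [hterm] at hsum
  have hlow : (1 / 4) * (∑ m ∈ s, f m) * Z ≤ ∫ x in (0:ℝ)..T, H x * ((1 - x / T) * P x) := by
    refine le_trans ?_ (sum_le_hasSum s ?_ hsum)
    · rw [Finset.mul_sum, Finset.sum_mul]
      apply Finset.sum_le_sum
      intro m hm
      have h1 := prod_half T hT (fun m => 2 * π * lam m) s m hm
      have h2 := hws m hm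
      have h3 := hf m
      calc 1 / 4 * f m * Z = f m * (1 / 2) * ((1 / 2) * Z) := by ring
        _ ≤ f m * w m * ∫ x in (0:ℝ)..T, (1 - x / T) * (Real.cos (2 * π * lam m * x) * P x) := by
          apply mul_le_mul _ h1 (by linarith) (hfw0 m)
          gcongr
    · intro n _
      exact mul_nonneg (hfw0 n) (prod_nonneg' T hT (fun m => 2 * π * lam m) s (2 * π * lam n))
  have hic : Continuous (fun x => H x * ((1 - x / T) * P x)) := by fun_prop
  have hpc : Continuous (fun x => ((1 - x / T) * P x)) := by fun_prop
  have hW0 : 0 ≤ W := (tsum_nonneg hfw0).trans hW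
  have hup1 : ∫ x in (0:ℝ)..Y, H x * ((1 - x / T) * P x) ≤ ∫ x in (0:ℝ)..Y, W * 2 ^ s.card := by
    apply intervalIntegral.integral_mono_on hY.le (hic.intervalIntegrable _ _) (by simp)
    intro x hx
    have h1 : x / T ≤ 1 := (div_le_one hT).2 (hx.2.trans hYT.le)
    have h2 : 0 ≤ x / T := div_nonneg hx.1 hT.le
    refine mul_le_mul (hHle x) ?_ (mul_nonneg (by linarith) (hP0 x)) hW0
    calc (1 - x / T) * P x ≤ 1 * P x := by
            apply mul_le_mul_of_nonneg_right _ (hP0 x); linarith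
        _ ≤ _ := by rw [one_mul]; exact hP2 x
  have hup2 : ∫ x in Y..T, H x * ((1 - x / T) * P x) ≤ ∫ x in Y..T, B * ((1 - x / T) * P x) := by
    apply intervalIntegral.integral_mono_on hYT.le (hic.intervalIntegrable _ _)
      ((hpc.const_mul B).intervalIntegrable _ _)
    intro x hx
    have h1 : x / T ≤ 1 := (div_le_one hT).2 hx.2
    exact mul_le_mul_of_nonneg_right (hH x hx) (mul_nonneg (by linarith) (hP0 x))
  have hup3 : ∫ x in Y..T, ((1 - x / T) * P x) ≤ Z := by
    rw [hZ, ← intervalIntegral.integral_add_adjacent_intervals (a := 0) (b := Y) (c := T)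
      (hpc.intervalIntegrable _ _) (hpc.intervalIntegrable _ _)]
    have : 0 ≤ ∫ x in (0:ℝ)..Y, ((1 - x / T) * P x) := by
      apply intervalIntegral.integral_nonneg hY.le
      intro x hx
      have h1 : x / T ≤ 1 := (div_le_one hT).2 (hx.2.trans hYT.le)
      exact mul_nonneg (by linarith) (hP0 x)
    linarith
  rw [← intervalIntegral.integral_add_adjacent_intervals (a := 0) (b := Y) (c := T)
      (hic.intervalIntegrable _ _) (hic.intervalIntegrable _ _)] at hlow
  rw [intervalIntegral.integral_const_mul] at hup2
  simp only [intervalIntegral.integral_const, sub_zero, smul_eq_mul] at hup1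
  have hB3 := mul_le_mul_of_nonneg_left hup3 hB
  have hZ0 : 0 < Z := by linarith
  have hfin : (1 / 4) * (∑ m ∈ s, f m) * Z ≤ B * Z + Y * (W * 2 ^ s.card) := by linarith
  have hE : Y * (W * 2 ^ s.card) ≤ 2 * (W * 2 ^ s.card * Y) / T * Z := by
    calc Y * (W * 2 ^ s.card) = 2 * (W * 2 ^ s.card * Y) / T * (T / 2) := by field_simp
      _ ≤ _ := by gcongr
  have : (1 / 4) * (∑ m ∈ s, f m) * Z ≤ (B + 2 * (W * 2 ^ s.card * Y) / T) * Z := by linarith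
  exact le_of_mul_le_mul_right this hZ0

theorem resonance_theorem_one :
    ∃ C : ℝ, 0 < C ∧
      ∀ (lam : ℕ → ℝ), (∀ n, 0 ≤ lam n) → StrictMono lam →
      ∀ (f : ℕ → ℝ), (∀ n, 0 ≤ f n) → Summable f →
      ∀ (F : ℝ → ℂ),
        (∀ x : ℝ, F x = ∑' n : ℕ, (f n : ℂ) * Complex.exp (2 * π * Complex.I * lam n * x)) →
      ∀ (M N : ℕ), 1 ≤ M → 1 ≤ N →
      ∀ (𝓜 : Finset ℕ), 𝓜.card = M → (∀ m ∈ 𝓜, 2 * |lam m - lam N| ≤ lam N) →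
      ∀ (β : ℝ) (X Y : ℝ), 1 ≤ Y → Y < 2 ^ M * X →
        sSup ((fun x => |(Complex.exp (Complex.I * β) * F x).re|) ''
            Set.Icc (Y / 2) (2 ^ (M + 1) * X)) ≥
          (1 / 16) * ∑ m ∈ 𝓜, f m - 4 * (F 0).re / (π ^ 2 * Y * lam N) -
            C * (Y * ((M : ℝ) + Real.log X) / X) *
              ∑' n : ℕ, (if lam n ≤ 2 * lam N then f n else 0) := by
  refine ⟨4, by norm_num, ?_⟩
  intro lam hl hmono f hf hs F hF M N hM hN 𝓜 hcard hm β X Y hY hYX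
  have hX : 0 < X := by
    have : (0:ℝ) < 2 ^ M * X := by linarith
    exact pos_of_mul_pos_right this (by positivity)
  have hL : 0 < lam N := (hl 0).trans_lt (hmono (by omega))
  have hY0 : 0 < Y := by linarith
  set g : ℝ → ℝ := fun x => (Complex.exp (Complex.I * β) * F x).re with hgdef
  have hg : ∀ x, HasSum (fun n => f n * Real.cos (β + 2 * π * lam n * x)) (g x) := by
    intro x
    have hsm : Summable (fun n => (f n : ℂ) * Complex.exp (2 * π * Complex.I * lam n * x)) := by
      refine Summable.of_norm_bounded hs ?_
      intro n
      have e : (2 * π * Complex.I * lam n * x : ℂ) = ((2 * π * lam n * x : ℝ) : ℂ) * Complex.I := by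
        push_cast; ring
      rw [e, norm_mul, Complex.norm_exp_ofReal_mul_I, mul_one, Complex.norm_real,
        Real.norm_of_nonneg (hf n)]
    have h1 := hsm.hasSum
    rw [← hF x] at h1
    have h2 := Complex.hasSum_re (h1.mul_left (Complex.exp (Complex.I * β)))
    convert h2 using 2 with n
    have e : Complex.exp (Complex.I * β) * ((f n : ℂ) * Complex.exp (2 * π * Complex.I * lam n * x)) =
        (f n : ℂ) * Complex.exp (((β + 2 * π * lam n * x : ℝ) : ℂ) * Complex.I) := by
      rw [mul_left_comm, ← Complex.exp_add]
      congr 2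
      push_cast; ring
    rw [e, Complex.re_ofReal_mul, Complex.exp_ofReal_mul_I_re]
  have hF0 : (F 0).re = ∑' n, f n := by
    rw [hF 0]
    simp only [Complex.ofReal_zero, mul_zero, Complex.exp_zero, mul_one]
    rw [← Complex.ofReal_tsum, Complex.ofReal_re]
  have hgle : ∀ x, |g x| ≤ ∑' n, f n := by
    intro x
    rw [← (hg x).tsum_eq, ← Real.norm_eq_abs]
    refine tsum_of_norm_bounded hs.hasSum ?_
    intro n
    rw [norm_mul, Real.norm_of_nonneg (hf n), Real.norm_eq_abs]
    exact mul_le_of_le_one_right (hf n) (Real.abs_cos_le_one _)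
  set S := sSup ((fun x => |g x|) '' Set.Icc (Y / 2) (2 ^ (M + 1) * X)) with hSdef
  have hSle : ∀ x ∈ Set.Icc (Y / 2) (2 ^ (M + 1) * X), |g x| ≤ S := by
    intro x hx
    apply le_csSup
    · refine ⟨∑' n, f n, ?_⟩
      rintro _ ⟨y, _, rfl⟩
      exact hgle y
    · exact ⟨x, hx, rfl⟩
  have hpow : (2:ℝ) ^ (M + 1) * X = 2 * (2 ^ M * X) := by rw [pow_succ]; ring
  have hS0 : 0 ≤ S := (abs_nonneg _).trans (hSle Y ⟨by linarith, by rw [hpow]; linarith⟩)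
  set W := ∑' n : ℕ, (if lam n ≤ 2 * lam N then f n else 0) with hWdef
  set w : ℕ → ℝ := fun n => triF (lam n / lam N - 1) with hwdef
  have hWs : Summable (fun n : ℕ => (if lam n ≤ 2 * lam N then f n else 0)) := by
    refine Summable.of_nonneg_of_le ?_ ?_ hs
    · intro n; split_ifs
      · exact hf n
      · exact le_rfl
    · intro n; split_ifs
      · exact le_rfl
      · exact hf n
  have hwle : ∀ n, f n * w n ≤ (if lam n ≤ 2 * lam N then f n else 0) := by
    intro n
    split_ifs with h
    · exact mul_le_of_le_one_right (hf n) (triF_le_one _)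
    · have : w n = 0 := by
        apply triF_zero
        push Not at h
        have : 2 < lam n / lam N := by rw [lt_div_iff₀ hL]; exact h
        rw [abs_of_nonneg (by linarith)]; linarith
      rw [this, mul_zero]
  have hfw : Summable (fun n => f n * w n) :=
    Summable.of_nonneg_of_le (fun n => mul_nonneg (hf n) (triF_nonneg _)) hwle hWs
  have hWle : ∑' n, f n * w n ≤ W := hfw.tsum_le_tsum hwle hWs
  have hW0 : 0 ≤ W := (tsum_nonneg fun n => mul_nonneg (hf n) (triF_nonneg _)).trans hWle
  have hws : ∀ m ∈ 𝓜, 1 / 2 ≤ w m := by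
    intro m hmm
    have h := hm m hmm
    have e : lam m / lam N - 1 = (lam m - lam N) / lam N := by field_simp
    simp only [hwdef, triF]
    refine le_trans ?_ (le_max_right _ _)
    rw [e, abs_div, abs_of_pos hL]
    have : |lam m - lam N| / lam N ≤ 1 / 2 := by
      rw [div_le_iff₀ hL]; linarith
    linarith
  have hF0' : 0 ≤ ∑' n, f n := tsum_nonneg hf
  have h2 := step_two lam f hf hs w (fun n => triF_nonneg _) 𝓜 hws W hfw hWle
    (2 * (S + 4 * (∑' n, f n) / (π ^ 2 * Y * lam N))) (2 ^ M * X) Y (by positivity) hY0 hYX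
    (by
      intro x hx
      apply step_one lam f hl hf hs g β hg (lam N) Y S x hL hY0
      intro u hu
      rw [abs_le] at hu
      apply hSle
      constructor
      · linarith [hx.1]
      · rw [hpow]; linarith [hx.2])
  rw [hcard] at h2
  have e2 : 2 * (W * 2 ^ M * Y) / (2 ^ M * X) = 2 * (W * (Y / X)) := by field_simp
  rw [e2] at h2
  have hlog : 1 / 4 ≤ (M : ℝ) + Real.log X := by
    have h1 : 0 ≤ Real.log (2 ^ M * X) := Real.log_nonneg (by linarith)
    rw [Real.log_mul (by positivity) hX.ne', Real.log_pow] at h1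
    have h3 := Real.log_two_lt_d9
    have h4 : (1:ℝ) ≤ M := by exact_mod_cast hM
    nlinarith
  have hsum0 : 0 ≤ ∑ m ∈ 𝓜, f m := Finset.sum_nonneg fun m _ => hf m
  have herr : W * (Y / X) ≤ 4 * (Y * ((M : ℝ) + Real.log X) / X) * W := by
    have : 4 * (Y * ((M : ℝ) + Real.log X) / X) * W = (4 * ((M : ℝ) + Real.log X)) * (W * (Y / X)) := by
      ring
    rw [this]
    exact le_mul_of_one_le_left (by positivity) (by linarith)
  rw [hF0, ge_iff_le]
  linarith
end
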